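/- arXiv:1403.4123 — 4 statements merged into one kernel-verified Lean document; each statement's English description precedes it below -/
import Mathlib

section
/- Let n ≥ 2 and let μ₁, …, μₙ be real numbers with ∑ᵢ μᵢ = 0. Set B = ∑ᵢ μᵢ². Then |∑ᵢ μᵢ³| ≤ ((n−2)/√(n(n−1))) · B^{3/2}. -/
open Finset

/-!
Let `B = ∑ xᵢ²` and let `c ≥ 0` satisfy `n (n - 1) c² = B`. Cauchy–Schwarz applied to the terms
other than `xᵢ` gives `xᵢ ≤ (n - 1) c`, so summing `(xᵢ - (n - 1) c) (xᵢ + c)² ≤ 0` and using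
`∑ xᵢ = 0` yields `∑ xᵢ³ ≤ (n - 2) c B`. The cubic is the one that vanishes on the extremal family
`((n - 1) c, -c, …, -c)`. The lower bound is the same inequality for `-x`.
-/

section ZeroSum

variable {ι R : Type*} [CommRing R] {s : Finset ι} {x : ι → R}

lemma sum_sub_mul_add_sq_of_sum_eq_zero (hx : ∑ i ∈ s, x i = 0) (a c : R) :
    ∑ i ∈ s, (x i - a) * (x i + c) ^ 2
      = ∑ i ∈ s, x i ^ 3 + (2 * c - a) * ∑ i ∈ s, x i ^ 2 - #s * (a * c ^ 2) := by
  have expand (i : ι) : (x i - a) * (x i + c) ^ 2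
      = x i ^ 3 + (2 * c - a) * x i ^ 2 + (c ^ 2 - 2 * a * c) * x i - a * c ^ 2 := by ring
  simp only [expand, sum_sub_distrib, sum_add_distrib, ← mul_sum, hx, sum_const, nsmul_eq_mul,
    mul_zero, add_zero]
  ring

variable [LinearOrder R] [IsStrictOrderedRing R]

lemma card_mul_sq_le_of_sum_eq_zero (hx : ∑ i ∈ s, x i = 0) {i : ι} (hi : i ∈ s) :
    #s * x i ^ 2 ≤ (#s - 1) * ∑ j ∈ s, x j ^ 2 := by
  classical
  have cauchy_schwarz : (∑ j ∈ s.erase i, x j) ^ 2 ≤ #(s.erase i) * ∑ j ∈ s.erase i, x j ^ 2 :=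
    sq_sum_le_card_mul_sum_sq
  rw [sum_erase_eq_sub hi, sum_erase_eq_sub hi, hx, cast_card_erase_of_mem hi] at cauchy_schwarz
  linarith

lemma sum_pow_three_le_of_le (hx : ∑ i ∈ s, x i = 0) {a : R} (ha : ∀ i ∈ s, x i ≤ a) (c : R) :
    ∑ i ∈ s, x i ^ 3 ≤ (a - 2 * c) * ∑ i ∈ s, x i ^ 2 + #s * (a * c ^ 2) := by
  have nonpos : ∑ i ∈ s, (x i - a) * (x i + c) ^ 2 ≤ 0 := sum_nonpos fun i hi ↦
    mul_nonpos_of_nonpos_of_nonneg (sub_nonpos.2 (ha i hi)) (sq_nonneg _)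
  rw [sum_sub_mul_add_sq_of_sum_eq_zero hx] at nonpos
  linarith

variable {c : R}

lemma le_card_sub_one_mul_of_sum_sq_eq (hx : ∑ i ∈ s, x i = 0) (hc : 0 ≤ c)
    (hsq : ∑ i ∈ s, x i ^ 2 = #s * (#s - 1) * c ^ 2) {i : ι} (hi : i ∈ s) :
    x i ≤ (#s - 1) * c := by
  have one_le_card : (1 : R) ≤ #s := Nat.one_le_cast.2 (card_pos.2 ⟨i, hi⟩)
  have sq_le : x i ^ 2 ≤ ((#s - 1) * c) ^ 2 := by
    refine le_of_mul_le_mul_left ?_ (zero_lt_one.trans_le one_le_card)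
    calc #s * x i ^ 2 ≤ (#s - 1) * ∑ j ∈ s, x j ^ 2 := card_mul_sq_le_of_sum_eq_zero hx hi
      _ = #s * ((#s - 1) * c) ^ 2 := by rw [hsq]; ring
  exact le_of_sq_le_sq sq_le (mul_nonneg (sub_nonneg.2 one_le_card) hc)

lemma sum_pow_three_le_of_sum_sq_eq (hx : ∑ i ∈ s, x i = 0) (hc : 0 ≤ c)
    (hsq : ∑ i ∈ s, x i ^ 2 = #s * (#s - 1) * c ^ 2) :
    ∑ i ∈ s, x i ^ 3 ≤ (#s - 2) * c * ∑ i ∈ s, x i ^ 2 :=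
  calc ∑ i ∈ s, x i ^ 3
      ≤ ((#s - 1) * c - 2 * c) * ∑ i ∈ s, x i ^ 2 + #s * ((#s - 1) * c * c ^ 2) :=
        sum_pow_three_le_of_le hx (fun _ ↦ le_card_sub_one_mul_of_sum_sq_eq hx hc hsq) c
    _ = (#s - 2) * c * ∑ i ∈ s, x i ^ 2 := by rw [hsq]; ring

lemma abs_sum_pow_three_le_of_sum_sq_eq (hx : ∑ i ∈ s, x i = 0) (hc : 0 ≤ c)
    (hsq : ∑ i ∈ s, x i ^ 2 = #s * (#s - 1) * c ^ 2) :
    |∑ i ∈ s, x i ^ 3| ≤ (#s - 2) * c * ∑ i ∈ s, x i ^ 2 := by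
  have neg_le : ∑ i ∈ s, (-x i) ^ 3 ≤ (#s - 2) * c * ∑ i ∈ s, (-x i) ^ 2 :=
    sum_pow_three_le_of_sum_sq_eq (by rw [sum_neg_distrib, hx, neg_zero]) hc
      (by simpa only [neg_sq] using hsq)
  simp only [neg_sq, Odd.neg_pow (by decide : Odd 3), sum_neg_distrib] at neg_le
  exact abs_le'.2 ⟨sum_pow_three_le_of_sum_sq_eq hx hc hsq, neg_le⟩

end ZeroSum

theorem third_moment_bound_general {ι : Type*} {s : Finset ι} (hs : 2 ≤ #s) {x : ι → ℝ}
    (hx : ∑ i ∈ s, x i = 0) :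
    |∑ i ∈ s, x i ^ 3|
      ≤ (#s - 2) / √(#s * (#s - 1)) * ((∑ i ∈ s, x i ^ 2) * √(∑ i ∈ s, x i ^ 2)) := by
  set B := ∑ i ∈ s, x i ^ 2
  have B_nonneg : 0 ≤ B := sum_nonneg fun i _ ↦ sq_nonneg (x i)
  have two_le_card : (2 : ℝ) ≤ #s := Nat.ofNat_le_cast.2 hs
  have card_mul_pos : (0 : ℝ) < #s * (#s - 1) := mul_pos (by linarith) (by linarith)
  have ratio_nonneg : 0 ≤ √B / √(#s * (#s - 1)) :=
    div_nonneg (Real.sqrt_nonneg _) (Real.sqrt_nonneg _)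
  have B_eq : B = #s * (#s - 1) * (√B / √(#s * (#s - 1))) ^ 2 := by
    rw [div_pow, Real.sq_sqrt B_nonneg, Real.sq_sqrt card_mul_pos.le,
      mul_div_cancel₀ _ card_mul_pos.ne']
  calc |∑ i ∈ s, x i ^ 3| ≤ (#s - 2) * (√B / √(#s * (#s - 1))) * B :=
        abs_sum_pow_three_le_of_sum_sq_eq hx ratio_nonneg B_eq
    _ = (#s - 2) / √(#s * (#s - 1)) * (B * √B) := by ring

/-- Sharp bound on the third moment of a trace-free family of reals:
if `μ₁, …, μₙ` (n ≥ 2) satisfy `∑ᵢ μᵢ = 0` and `B = ∑ᵢ μᵢ²`, then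
`|∑ᵢ μᵢ³| ≤ ((n−2)/√(n(n−1))) · B^{3/2}` (with `B^{3/2} = B·√B`). -/
theorem third_moment_bound (n : ℕ) (hn : 2 ≤ n) (μ : Fin n → ℝ)
    (hsum : ∑ i, μ i = 0) (B : ℝ) (hB : B = ∑ i, (μ i) ^ 2) :
    |∑ i, (μ i) ^ 3| ≤ ((n : ℝ) - 2) / Real.sqrt ((n : ℝ) * ((n : ℝ) - 1)) * (B * Real.sqrt B) := by
  subst hB
  simpa only [card_fin] using third_moment_bound_general ((card_fin n).symm ▸ hn) hsum
end

section
/- Let n ≥ 1 and let h : Fin n → Fin n → Fin n → ℝ be totally symmetric (invariant under every permutation of its three indices). Then ∑_{i,j,k} h_{ijk}² − (1/n) ∑_k (∑_i h_{iik})² ≥ 2 ∑_{i ≠ k} h_{iik}² + ∑_{i,j,k pairwise distinct} h_{ijk}² ≥ 0. -/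
open Finset

/-!
Group the entries `h i j k` by which indices coincide. By symmetry each `h i i k` with `i ≠ k`
occurs three times in the full sum of squares. One copy of these, together with the entries
`h i i i`, forms `∑ i, ∑ k, h i i k ^ 2`, which by Cauchy–Schwarz in `i` absorbs the trace term;
the other two copies and the entries with distinct indices remain.
-/

section SplittingSums

variable {ι M : Type*} [Fintype ι] [DecidableEq ι] [AddCommMonoid M]

theorem sum_eq_add_sum_ite_ne (a : ι) (g : ι → M) :
    ∑ k, g k = g a + ∑ k, if a ≠ k then g k else 0 := by
  rw [← sum_filter, filter_ne, add_sum_erase _ _ (mem_univ a)]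

theorem sum_eq_add_add_sum_ite_ne_and_ne {a b : ι} (hab : a ≠ b) (g : ι → M) :
    ∑ k, g k = g a + g b + ∑ k, if b ≠ k ∧ a ≠ k then g k else 0 := by
  rw [sum_eq_add_sum_ite_ne a g, sum_eq_add_sum_ite_ne b (fun k => if a ≠ k then g k else 0),
    if_pos hab, ← add_assoc]
  simp only [ite_and]

theorem sum_sum_eq_sum_diag_add_sum_ite_ne (g : ι → ι → M) :
    ∑ i, ∑ j, g i j = ∑ i, g i i + ∑ i, ∑ j, if i ≠ j then g i j else 0 := by
  rw [← sum_add_distrib]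
  exact sum_congr rfl fun i _ => sum_eq_add_sum_ite_ne i (g i)

theorem sum_sum_sum_eq_sum_coincident_add_sum_distinct (f : ι → ι → ι → M) :
    ∑ i, ∑ j, ∑ k, f i j k = ∑ i, ∑ k, f i i k
      + ((∑ i, ∑ j, if i ≠ j then f i j i else 0) + ∑ i, ∑ j, if i ≠ j then f i j j else 0)
      + ∑ i, ∑ j, ∑ k, if i ≠ j ∧ j ≠ k ∧ i ≠ k then f i j k else 0 := by
  have split_last (i j : ι) : (if i ≠ j then ∑ k, f i j k else 0)
      = (if i ≠ j then f i j i else 0) + (if i ≠ j then f i j j else 0)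
        + ∑ k, if i ≠ j ∧ j ≠ k ∧ i ≠ k then f i j k else 0 := by
    by_cases hij : i = j
    · simp [hij]
    · simpa [hij] using sum_eq_add_add_sum_ite_ne_and_ne hij (f i j)
  rw [sum_sum_eq_sum_diag_add_sum_ite_ne]
  simp only [split_last, sum_add_distrib, add_assoc]

theorem sum_sum_sum_eq_of_symmetric {f : ι → ι → ι → M}
    (hf₁ : ∀ i j k, f i j k = f j i k) (hf₂ : ∀ i j k, f i j k = f i k j) :
    ∑ i, ∑ j, ∑ k, f i j k = ∑ i, ∑ k, f i i k
      + 2 • (∑ i, ∑ k, if i ≠ k then f i i k else 0)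
      + ∑ i, ∑ j, ∑ k, if i ≠ j ∧ j ≠ k ∧ i ≠ k then f i j k else 0 := by
  have outer_pair_eq : (∑ i, ∑ j, if i ≠ j then f i j i else 0)
      = ∑ i, ∑ k, if i ≠ k then f i i k else 0 := by
    simp only [fun i j => hf₂ i j i]
  have last_pair_eq : (∑ i, ∑ j, if i ≠ j then f i j j else 0)
      = ∑ i, ∑ k, if i ≠ k then f i i k else 0 := by
    rw [sum_comm]
    simp only [fun i j => (hf₁ i j j).trans (hf₂ j i j), ne_comm]
  rw [sum_sum_sum_eq_sum_coincident_add_sum_distinct, outer_pair_eq, last_pair_eq, two_nsmul]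

end SplittingSums

section OrderedField

variable {ι κ K : Type*} [Fintype ι] [Fintype κ] [Field K] [LinearOrder K] [IsStrictOrderedRing K]

theorem one_div_card_mul_sum_sq_sum_le (a : ι → κ → K) :
    1 / (Fintype.card ι : K) * ∑ k, (∑ i, a i k) ^ 2 ≤ ∑ i, ∑ k, a i k ^ 2 := by
  rw [mul_sum, sum_comm]
  refine sum_le_sum fun k _ => ?_
  rw [one_div_mul_eq_div]
  exact div_le_of_le_mul₀ (Nat.cast_nonneg _) (sum_nonneg fun i _ => sq_nonneg (a i k))
    (by simpa [mul_comm] using sq_sum_le_card_mul_sum_sq (s := univ) (f := fun i => a i k))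

theorem sum_sq_sub_grad_H_bound_general [DecidableEq ι] (h : ι → ι → ι → K)
    (hsym1 : ∀ i j k, h i j k = h j i k) (hsym2 : ∀ i j k, h i j k = h i k j) :
    ((∑ i, ∑ j, ∑ k, (h i j k) ^ 2) - (1 / (Fintype.card ι : K)) * ∑ k, (∑ i, h i i k) ^ 2
      ≥ 2 * (∑ i, ∑ k, if i ≠ k then (h i i k) ^ 2 else 0)
        + ∑ i, ∑ j, ∑ k, if i ≠ j ∧ j ≠ k ∧ i ≠ k then (h i j k) ^ 2 else 0)
    ∧ (2 * (∑ i, ∑ k, if i ≠ k then (h i i k) ^ 2 else 0)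
        + (∑ i, ∑ j, ∑ k, if i ≠ j ∧ j ≠ k ∧ i ≠ k then (h i j k) ^ 2 else 0) ≥ 0) := by
  constructor
  · have decomposition := sum_sum_sum_eq_of_symmetric (f := fun i j k => h i j k ^ 2)
      (fun i j k => congrArg (· ^ 2) (hsym1 i j k)) (fun i j k => congrArg (· ^ 2) (hsym2 i j k))
    have cauchy_schwarz := one_div_card_mul_sum_sq_sum_le fun i k => h i i k
    rw [nsmul_eq_mul, Nat.cast_ofNat] at decomposition
    linarith
  · positivity

end OrderedField

/-- For a totally symmetric three-index array `h`,
`∑_{i,j,k} h_{ijk}² − (1/n) ∑_k (∑_i h_{iik})² ≥ 2 ∑_{i≠k} h_{iik}²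
  + ∑_{i,j,k pairwise distinct} h_{ijk}² ≥ 0`. -/
theorem sum_sq_sub_grad_H_bound (n : ℕ) (hn : 1 ≤ n) (h : Fin n → Fin n → Fin n → ℝ)
    (hsym1 : ∀ i j k, h i j k = h j i k) (hsym2 : ∀ i j k, h i j k = h i k j) :
    ((∑ i, ∑ j, ∑ k, (h i j k) ^ 2) - (1 / (n : ℝ)) * ∑ k, (∑ i, h i i k) ^ 2
      ≥ 2 * (∑ i, ∑ k, if i ≠ k then (h i i k) ^ 2 else 0)
        + ∑ i, ∑ j, ∑ k, if i ≠ j ∧ j ≠ k ∧ i ≠ k then (h i j k) ^ 2 else 0)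
    ∧ (2 * (∑ i, ∑ k, if i ≠ k then (h i i k) ^ 2 else 0)
        + (∑ i, ∑ j, ∑ k, if i ≠ j ∧ j ≠ k ∧ i ≠ k then (h i j k) ^ 2 else 0) ≥ 0) := by
  simpa only [Fintype.card_fin] using sum_sq_sub_grad_H_bound_general h hsym1 hsym2
end

section
/- Let n ≥ 1 and let u, v : ℝⁿ → ℝ be C² functions such that ∫_{ℝⁿ} (|u(x)|·‖∇v(x)‖ + ‖∇u(x)‖·‖∇v(x)‖ + |u(x)·(Δv(x) − ⟨x, ∇v(x)⟩)|) e^{−‖x‖²/2} dx < ∞. Then ∫_{ℝⁿ} u(x)·(Δv(x) − ⟨x, ∇v(x)⟩) e^{−‖x‖²/2} dx = −∫_{ℝⁿ} ⟨∇u(x), ∇v(x)⟩ e^{−‖x‖²/2} dx. -/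
open MeasureTheory
open scoped RealInnerProductSpace

/-- The Euclidean Laplacian of `f : ℝⁿ → ℝ` at `x`: the trace of the Hessian,
`Δf(x) = ∑ᵢ ∂²f/∂xᵢ²(x)`. -/
noncomputable def euclLaplacian {n : ℕ} (f : EuclideanSpace ℝ (Fin n) → ℝ)
    (x : EuclideanSpace ℝ (Fin n)) : ℝ :=
  ∑ i : Fin n,
    fderiv ℝ (fun y => fderiv ℝ f y (EuclideanSpace.single i 1)) x (EuclideanSpace.single i 1)

/-!
The field `F = u e^{-φ} ∇v` has divergence `(u ℒv + ⟪∇u, ∇v⟫) e^{-φ}`, where `ℒ = Δ - ⟪∇φ, ∇·⟫`, so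
the claim says that `∫ div F = 0`. For compactly supported fields this is the vanishing of the
integral of a derivative. In general, multiply `F` by cutoffs `χ_R(x) = χ(x / R)`: as `R → ∞` the
error `∫ dχ_R(F)` is `O(R⁻¹ ∫ ‖F‖)`, so integrability of `F` and `div F` suffices.
-/

open Filter Topology
open scoped Gradient Laplacian

section Divergence

variable {E : Type*} [NormedAddCommGroup E] [NormedSpace ℝ E]

/-- The divergence of a vector field on a normed space, as the trace of its derivative so that no
basis or inner product has to be chosen. -/
noncomputable def divergence (F : E → E) (x : E) : ℝ :=
  LinearMap.trace ℝ E (fderiv ℝ F x)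

variable [FiniteDimensional ℝ E]

theorem divergence_smul {f : E → ℝ} {F : E → E} {x : E}
    (hf : DifferentiableAt ℝ f x) (hF : DifferentiableAt ℝ F x) :
    divergence (fun y => f y • F y) x = f x * divergence F x + fderiv ℝ f x (F x) := by
  simp only [divergence, fderiv_fun_smul hf hF, ContinuousLinearMap.toLinearMap_add,
    ContinuousLinearMap.toLinearMap_smul, map_add, map_smul, smul_eq_mul]
  congr 1
  exact LinearMap.trace_smulRight _ _

theorem continuous_divergence {F : E → E} (hF : ContDiff ℝ 1 F) : Continuous (divergence F) :=
  (LinearMap.trace ℝ E ∘ₗ ContinuousLinearMap.coeLM ℝ).continuous_of_finiteDimensional.comp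
    (hF.continuous_fderiv one_ne_zero)

end Divergence

section Cutoff

variable (E : Type*) [NormedAddCommGroup E] [NormedSpace ℝ E]

/-- The profile of `cutoff`: a bump function equal to `1` on the closed unit ball and supported in
the ball of radius `2`. -/
def unitBump : ContDiffBump (0 : E) := ⟨1, 2, one_pos, one_lt_two⟩

variable {E} [FiniteDimensional ℝ E]

/-- The smooth cutoff at scale `R`, which exhausts the space as `R → ∞`; for `R = 0` it is the
constant `1`. -/
noncomputable def cutoff (R : ℝ) (x : E) : ℝ := unitBump E (R⁻¹ • x)

theorem contDiff_cutoff (R : ℝ) : ContDiff ℝ 1 (cutoff R : E → ℝ) :=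
  (unitBump E).contDiff.comp (contDiff_const_smul R⁻¹)

theorem hasCompactSupport_cutoff {R : ℝ} (hR : R ≠ 0) : HasCompactSupport (cutoff R : E → ℝ) :=
  (unitBump E).hasCompactSupport.comp_smul (inv_ne_zero hR)

theorem norm_cutoff_le_one (R : ℝ) (x : E) : ‖cutoff R x‖ ≤ 1 :=
  (Real.norm_of_nonneg (unitBump E).nonneg).trans_le (unitBump E).le_one

theorem tendsto_cutoff_atTop (x : E) : Tendsto (cutoff · x) atTop (𝓝 1) := by
  have hscale : Tendsto (fun R : ℝ => R⁻¹ • x) atTop (𝓝 0) := by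
    simpa only [zero_smul] using (tendsto_inv_atTop_zero (𝕜 := ℝ)).smul_const x
  have hone : unitBump E 0 = 1 :=
    (unitBump E).one_of_mem_closedBall (Metric.mem_closedBall_self (unitBump E).rIn_pos.le)
  exact hone ▸ ((unitBump E).continuous.tendsto 0).comp hscale

variable (E) in
theorem exists_norm_fderiv_cutoff_le :
    ∃ C, ∀ (R : ℝ) (x : E), ‖fderiv ℝ (cutoff R) x‖ ≤ |R|⁻¹ * C := by
  obtain ⟨C, hC⟩ := ((unitBump E).hasCompactSupport.fderiv ℝ).exists_bound_of_continuous
    ((unitBump E).contDiff.continuous_fderiv one_ne_zero)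
  refine ⟨C, fun R x => ?_⟩
  have hchain : fderiv ℝ (cutoff R) x = R⁻¹ • fderiv ℝ (unitBump E) (R⁻¹ • x) :=
    fderiv_comp_smul R⁻¹
  rw [hchain, norm_smul, norm_inv, Real.norm_eq_abs]
  gcongr
  exact hC _

variable [MeasurableSpace E] {μ : Measure E}

theorem tendsto_integral_fderiv_cutoff {F : E → E} (hF : Integrable F μ) :
    Tendsto (fun R => ∫ x, fderiv ℝ (cutoff R) x (F x) ∂μ) atTop (𝓝 0) := by
  obtain ⟨C, hC⟩ := exists_norm_fderiv_cutoff_le E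
  have hbound (R : ℝ) :
      ‖∫ x, fderiv ℝ (cutoff R) x (F x) ∂μ‖ ≤ |R|⁻¹ * (C * ∫ x, ‖F x‖ ∂μ) := by
    calc ‖∫ x, fderiv ℝ (cutoff R) x (F x) ∂μ‖
        ≤ ∫ x, |R|⁻¹ * C * ‖F x‖ ∂μ :=
          norm_integral_le_of_norm_le (hF.norm.const_mul _) <| .of_forall fun x =>
            (fderiv ℝ (cutoff R) x).le_of_opNorm_le (hC R x) (F x)
      _ = |R|⁻¹ * (C * ∫ x, ‖F x‖ ∂μ) := by rw [integral_const_mul, mul_assoc]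
  refine squeeze_zero_norm hbound ?_
  have habs : Tendsto (fun R : ℝ => |R|⁻¹) atTop (𝓝 0) :=
    tendsto_inv_atTop_zero.comp tendsto_abs_atTop_atTop
  simpa only [zero_mul] using habs.mul_const _

end Cutoff

section DivergenceTheorem

variable {E : Type*} [NormedAddCommGroup E] [NormedSpace ℝ E] [FiniteDimensional ℝ E]
  [MeasurableSpace E] [BorelSpace E] {μ : Measure E} [μ.IsAddHaarMeasure]

theorem integral_fderiv_eq_zero_of_hasCompactSupport {G : Type*} [NormedAddCommGroup G]
    [NormedSpace ℝ G] [CompleteSpace G] {f : E → G} (hf : ContDiff ℝ 1 f)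
    (hc : HasCompactSupport f) : ∫ x, fderiv ℝ f x ∂μ = 0 := by
  have hint : Integrable (fderiv ℝ f) μ :=
    (hf.continuous_fderiv one_ne_zero).integrable_of_hasCompactSupport (hc.fderiv ℝ)
  ext v
  rw [ContinuousLinearMap.integral_apply hint]
  simpa using integral_smul_fderiv_eq_neg_fderiv_smul_of_integrable (μ := μ)
    (f := fun _ : E => (1 : ℝ)) (g := f) (v := v) (by simp)
    (by simpa using hint.apply_continuousLinearMap v)
    (by simpa using hf.continuous.integrable_of_hasCompactSupport hc) (by fun_prop)
    (fun x _ => hf.differentiable one_ne_zero x)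

theorem integral_divergence_eq_zero_of_hasCompactSupport {F : E → E} (hF : ContDiff ℝ 1 F)
    (hc : HasCompactSupport F) : ∫ x, divergence F x ∂μ = 0 := by
  have hint : Integrable (fderiv ℝ F) μ :=
    (hF.continuous_fderiv one_ne_zero).integrable_of_hasCompactSupport (hc.fderiv ℝ)
  let trace : (E →L[ℝ] E) →L[ℝ] ℝ :=
    (LinearMap.trace ℝ E ∘ₗ ContinuousLinearMap.coeLM ℝ).toContinuousLinearMap
  calc ∫ x, divergence F x ∂μ
      = trace (∫ x, fderiv ℝ F x ∂μ) := trace.integral_comp_comm hint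
    _ = 0 := by rw [integral_fderiv_eq_zero_of_hasCompactSupport hF hc, map_zero]

theorem integral_mul_divergence_eq_neg_of_hasCompactSupport {f : E → ℝ} {F : E → E}
    (hf : ContDiff ℝ 1 f) (hc : HasCompactSupport f) (hF : ContDiff ℝ 1 F) :
    ∫ x, f x * divergence F x ∂μ = -∫ x, fderiv ℝ f x (F x) ∂μ := by
  have hfdiv : Integrable (fun x => f x * divergence F x) μ :=
    (hf.continuous.mul (continuous_divergence hF)).integrable_of_hasCompactSupport hc.mul_right
  have hdf : Integrable (fun x => fderiv ℝ f x (F x)) μ :=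
    ((hf.continuous_fderiv one_ne_zero).clm_apply hF.continuous).integrable_of_hasCompactSupport
      ((hc.fderiv ℝ).mono fun x hx h0 => hx (by simp [h0]))
  have hzero : ∫ x, divergence (fun y => f y • F y) x ∂μ = 0 :=
    integral_divergence_eq_zero_of_hasCompactSupport (hf.smul hF) hc.smul_right
  simp_rw [divergence_smul (hf.differentiable one_ne_zero _) (hF.differentiable one_ne_zero _)]
    at hzero
  rw [integral_add hfdiv hdf] at hzero
  exact eq_neg_of_add_eq_zero_left hzero

theorem integral_divergence_eq_zero {F : E → E} (hF : ContDiff ℝ 1 F) (hFi : Integrable F μ)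
    (hdiv : Integrable (divergence F) μ) : ∫ x, divergence F x ∂μ = 0 := by
  have hlim : Tendsto (fun R => ∫ x, cutoff R x * divergence F x ∂μ) atTop
      (𝓝 (∫ x, divergence F x ∂μ)) := by
    refine tendsto_integral_filter_of_dominated_convergence (fun x => ‖divergence F x‖)
      (.of_forall fun R => ?_) (.of_forall fun R => .of_forall fun x => ?_) hdiv.norm
      (.of_forall fun x => ?_)
    · exact (contDiff_cutoff R).continuous.aestronglyMeasurable.mul hdiv.aestronglyMeasurable
    · rw [norm_mul]
      exact mul_le_of_le_one_left (norm_nonneg _) (norm_cutoff_le_one R x)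
    · simpa only [one_mul] using (tendsto_cutoff_atTop x).mul_const (divergence F x)
  have hlim_zero : Tendsto (fun R => ∫ x, cutoff R x * divergence F x ∂μ) atTop (𝓝 0) := by
    rw [← neg_zero]
    refine (tendsto_integral_fderiv_cutoff hFi).neg.congr' ?_
    filter_upwards [eventually_ne_atTop 0] with R hR
    exact (integral_mul_divergence_eq_neg_of_hasCompactSupport (contDiff_cutoff R)
      (hasCompactSupport_cutoff hR) hF).symm
  exact tendsto_nhds_unique hlim hlim_zero

end DivergenceTheorem

section Gradient

variable {E : Type*} [NormedAddCommGroup E] [InnerProductSpace ℝ E]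

section Complete

variable [CompleteSpace E]

theorem contDiff_gradient {f : E → ℝ} {m k : WithTop ℕ∞} (hf : ContDiff ℝ k f)
    (hmk : m + 1 ≤ k) : ContDiff ℝ m (∇ f) :=
  -- Over `ℝ` the conjugate-linear `toDual` unifies with a linear isometry by unfolding.
  (LinearIsometryEquiv.contDiff (𝕜 := ℝ) (InnerProductSpace.toDual ℝ E).symm).comp
    (hf.fderiv_right hmk)

theorem inner_fderiv_gradient (f : E → ℝ) (x v w : E) :
    ⟪w, fderiv ℝ (∇ f) x v⟫ = fderiv ℝ (fderiv ℝ f) x v w := by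
  have hcomp : fderiv ℝ (∇ f) x = _ :=
    LinearIsometryEquiv.comp_fderiv (𝕜 := ℝ) (InnerProductSpace.toDual ℝ E).symm
      (f := fderiv ℝ f) (x := x)
  rw [hcomp, real_inner_comm]
  exact InnerProductSpace.toDual_symm_apply

theorem gradient_norm_sq_div_two (x : E) : ∇ (fun y : E => ‖y‖ ^ 2 / 2) x = x := by
  refine ext_inner_right ℝ fun w => ?_
  have hderiv : HasFDerivAt (fun y : E => ‖y‖ ^ 2 / 2) _ x :=
    (hasStrictFDerivAt_norm_sq x).hasFDerivAt.mul_const (2⁻¹ : ℝ)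
  rw [inner_gradient_left, hderiv.fderiv]
  simp

end Complete

variable [FiniteDimensional ℝ E]

theorem divergence_gradient (f : E → ℝ) : divergence (∇ f) = Δ f := by
  ext x
  rw [InnerProductSpace.laplacian_eq_iteratedFDeriv_stdOrthonormalBasis, divergence,
    LinearMap.trace_eq_sum_inner _ (stdOrthonormalBasis ℝ E)]
  simp [iteratedFDeriv_two_apply, inner_fderiv_gradient]

theorem continuous_laplacian {f : E → ℝ} (hf : ContDiff ℝ 2 f) : Continuous (Δ f) :=
  divergence_gradient f ▸ continuous_divergence (contDiff_gradient hf one_add_one_eq_two.le)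

theorem euclLaplacian_eq_laplacian {n : ℕ} {f : EuclideanSpace ℝ (Fin n) → ℝ}
    {x : EuclideanSpace ℝ (Fin n)} (hf : DifferentiableAt ℝ (fderiv ℝ f) x) :
    euclLaplacian f x = Δ f x := by
  rw [InnerProductSpace.laplacian_eq_iteratedFDeriv_orthonormalBasis f
    (EuclideanSpace.basisFun (Fin n) ℝ)]
  simp [euclLaplacian, iteratedFDeriv_two_apply, fderiv_clm_apply hf (differentiableAt_const _)]

end Gradient

section WeightedIntegrationByParts

variable {E : Type*} [NormedAddCommGroup E] [InnerProductSpace ℝ E] [FiniteDimensional ℝ E]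

/-- The drift Laplacian `Δf - ⟪∇φ, ∇f⟫` associated with the weight `e^{-φ}`. The operator `ℒ` of the
Gaussian weight is the case `φ x = ‖x‖² / 2`. -/
noncomputable def driftLaplacian (φ f : E → ℝ) (x : E) : ℝ :=
  Δ f x - ⟪∇ φ x, ∇ f x⟫

variable {φ u v : E → ℝ}

theorem continuous_driftLaplacian (hφ : ContDiff ℝ 1 φ) (hv : ContDiff ℝ 2 v) :
    Continuous (driftLaplacian φ v) :=
  (continuous_laplacian hv).sub <|
    (contDiff_gradient hφ (zero_add 1).le).continuous.inner
      (contDiff_gradient hv one_add_one_eq_two.le).continuous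

theorem driftLaplacian_norm_sq_div_two {n : ℕ} {f : EuclideanSpace ℝ (Fin n) → ℝ}
    (hf : ContDiff ℝ 2 f) (x : EuclideanSpace ℝ (Fin n)) :
    driftLaplacian (fun y => ‖y‖ ^ 2 / 2) f x = euclLaplacian f x - ⟪x, ∇ f x⟫ := by
  have hf' : DifferentiableAt ℝ (fderiv ℝ f) x :=
    (hf.fderiv_right one_add_one_eq_two.le).differentiable one_ne_zero x
  rw [driftLaplacian, gradient_norm_sq_div_two, euclLaplacian_eq_laplacian hf']

theorem divergence_mul_exp_neg_smul_gradient {x : E} (hφ : DifferentiableAt ℝ φ x)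
    (hu : DifferentiableAt ℝ u x) (hv : DifferentiableAt ℝ (∇ v) x) :
    divergence (fun y => (u y * Real.exp (-φ y)) • ∇ v y) x
      = u x * driftLaplacian φ v x * Real.exp (-φ x) + ⟪∇ u x, ∇ v x⟫ * Real.exp (-φ x) := by
  have hexp : HasFDerivAt (fun y => Real.exp (-φ y)) (Real.exp (-φ x) • -fderiv ℝ φ x) x :=
    hφ.hasFDerivAt.neg.exp
  have hweight := hu.hasFDerivAt.fun_mul hexp
  rw [divergence_smul hweight.differentiableAt hv, hweight.fderiv, divergence_gradient]
  simp only [driftLaplacian, inner_gradient_left, add_apply, smul_apply, neg_apply, smul_eq_mul]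
  ring

variable [MeasurableSpace E] {μ : Measure E}

theorem integrable_terms_of_integrable_sum_norms [OpensMeasurableSpace E]
    (hφ : ContDiff ℝ 1 φ) (hu : ContDiff ℝ 1 u) (hv : ContDiff ℝ 2 v)
    (hint : Integrable (fun x => (|u x| * ‖∇ v x‖ + ‖∇ u x‖ * ‖∇ v x‖
      + |u x * driftLaplacian φ v x|) * Real.exp (-φ x)) μ) :
    Integrable (fun x => (u x * Real.exp (-φ x)) • ∇ v x) μ ∧
      Integrable (fun x => u x * driftLaplacian φ v x * Real.exp (-φ x)) μ ∧
      Integrable (fun x => ⟪∇ u x, ∇ v x⟫ * Real.exp (-φ x)) μ := by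
  have hexp : Continuous fun x => Real.exp (-φ x) := hφ.continuous.neg.rexp
  have hgradu : Continuous (∇ u) := (contDiff_gradient hu (zero_add 1).le).continuous
  have hgradv : Continuous (∇ v) := (contDiff_gradient hv one_add_one_eq_two.le).continuous
  have hdrift : Continuous (driftLaplacian φ v) := continuous_driftLaplacian hφ hv
  refine ⟨hint.mono' ((hu.continuous.mul hexp).smul hgradv).aestronglyMeasurable
      (.of_forall fun x => ?_),
    hint.mono' ((hu.continuous.mul hdrift).mul hexp).aestronglyMeasurable
      (.of_forall fun x => ?_),
    hint.mono' ((hgradu.inner hgradv).mul hexp).aestronglyMeasurable (.of_forall fun x => ?_)⟩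
  · rw [norm_smul, norm_mul, Real.norm_eq_abs, Real.norm_eq_abs, Real.abs_exp, mul_right_comm]
    gcongr
    rw [add_assoc]
    exact le_add_of_nonneg_right (by positivity)
  · rw [norm_mul, Real.norm_eq_abs, Real.norm_eq_abs, Real.abs_exp]
    gcongr
    exact le_add_of_nonneg_left (by positivity)
  · rw [norm_mul, Real.norm_eq_abs (Real.exp _), Real.abs_exp]
    gcongr
    calc ‖⟪∇ u x, ∇ v x⟫‖ ≤ ‖∇ u x‖ * ‖∇ v x‖ := norm_inner_le_norm _ _
      _ ≤ |u x| * ‖∇ v x‖ + ‖∇ u x‖ * ‖∇ v x‖ := le_add_of_nonneg_left (by positivity)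
      _ ≤ _ := le_add_of_nonneg_right (abs_nonneg _)

theorem gaussian_integration_by_parts_general [BorelSpace E] [μ.IsAddHaarMeasure]
    (hφ : ContDiff ℝ 1 φ) (hu : ContDiff ℝ 1 u) (hv : ContDiff ℝ 2 v)
    (hfield : Integrable (fun x => (u x * Real.exp (-φ x)) • ∇ v x) μ)
    (hdrift : Integrable (fun x => u x * driftLaplacian φ v x * Real.exp (-φ x)) μ)
    (hinner : Integrable (fun x => ⟪∇ u x, ∇ v x⟫ * Real.exp (-φ x)) μ) :
    ∫ x, u x * driftLaplacian φ v x * Real.exp (-φ x) ∂μ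
      = -∫ x, ⟪∇ u x, ∇ v x⟫ * Real.exp (-φ x) ∂μ := by
  have hgrad : ContDiff ℝ 1 (∇ v) := contDiff_gradient hv one_add_one_eq_two.le
  have hdiv : divergence (fun y => (u y * Real.exp (-φ y)) • ∇ v y) = fun x =>
      u x * driftLaplacian φ v x * Real.exp (-φ x) + ⟪∇ u x, ∇ v x⟫ * Real.exp (-φ x) :=
    funext fun x => divergence_mul_exp_neg_smul_gradient (hφ.differentiable one_ne_zero x)
      (hu.differentiable one_ne_zero x) (hgrad.differentiable one_ne_zero x)
  have hzero := integral_divergence_eq_zero (F := fun x => (u x * Real.exp (-φ x)) • ∇ v x)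
    ((hu.mul hφ.neg.exp).smul hgrad) hfield (hdiv ▸ hdrift.add hinner)
  rw [hdiv, integral_add hdrift hinner] at hzero
  exact eq_neg_of_add_eq_zero_left hzero

end WeightedIntegrationByParts

/-- Colding–Minicozzi weighted integration by parts on `ℝⁿ` (a `λ`-hypersurface with
`λ = 0`): if `u, v` are `C²` and
`∫ (|u|‖∇v‖ + ‖∇u‖‖∇v‖ + |u·(Δv − ⟨x,∇v⟩)|) e^{−‖x‖²/2} dx < ∞`, then
`∫ u·(Δv − ⟨x,∇v⟩) e^{−‖x‖²/2} dx = −∫ ⟨∇u,∇v⟩ e^{−‖x‖²/2} dx`. -/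
theorem gaussian_integration_by_parts (n : ℕ) (hn : 1 ≤ n)
    (u v : EuclideanSpace ℝ (Fin n) → ℝ)
    (hu : ContDiff ℝ 2 u) (hv : ContDiff ℝ 2 v)
    (hint : Integrable (fun x =>
      (|u x| * ‖gradient v x‖ + ‖gradient u x‖ * ‖gradient v x‖
        + |u x * (euclLaplacian v x - ⟪x, gradient v x⟫)|) * Real.exp (-‖x‖ ^ 2 / 2))) :
    ∫ x, u x * (euclLaplacian v x - ⟪x, gradient v x⟫) * Real.exp (-‖x‖ ^ 2 / 2)
      = -∫ x, ⟪gradient u x, gradient v x⟫ * Real.exp (-‖x‖ ^ 2 / 2) := by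
  have hφ : ContDiff ℝ 1 fun y : EuclideanSpace ℝ (Fin n) => ‖y‖ ^ 2 / 2 :=
    (contDiff_norm_sq ℝ).div_const 2
  have hu₁ : ContDiff ℝ 1 u := hu.of_le one_le_two
  simp only [← driftLaplacian_norm_sq_div_two hv, neg_div] at hint ⊢
  obtain ⟨hfield, hdrift, hinner⟩ := integrable_terms_of_integrable_sum_norms hφ hu₁ hv hint
  exact gaussian_integration_by_parts_general hφ hu₁ hv hfield hdrift hinner
end

section
/- Let n ≥ 1 and let f : ℝⁿ → ℝ be a C² function that is bounded from above. Then there exists a sequence of points (x_k) in ℝⁿ such that f(x_k) → sup f, ‖∇f(x_k)‖ → 0, and limsup_{k→∞} (Δf(x_k) − ⟨x_k, ∇f(x_k)⟩) ≤ 0. -/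
open Filter
open scoped RealInnerProductSpace Topology

/-!
Subtract the penalty `ε‖x‖²` from `f`: the difference attains its maximum at some `x_ε`, where
`∇f = 2ε x_ε` and `D²f ≤ 2ε`. Hence `Δf ≤ 2εn`, while the drift term `⟨x_ε, ∇f⟩ = 2ε‖x_ε‖²` has
the favourable sign. As `ε → 0` the penalized maxima converge to `sup f`, which forces both
`f(x_ε) → sup f` and `ε‖x_ε‖² → 0`; the latter gives `‖∇f(x_ε)‖² = 4ε · ε‖x_ε‖² → 0`.
-/

section Penalization

variable {X : Type*} {f p : X → ℝ}

lemma exists_isMaxOn_sub_smul [TopologicalSpace X] [Nonempty X] (hf : Continuous f)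
    (hbdd : BddAbove (Set.range f)) (hp : Continuous p) (hp_top : Tendsto p (cocompact X) atTop)
    {ε : ℝ} (hε : 0 < ε) :
    ∃ x, IsMaxOn (f - ε • p) Set.univ x := by
  obtain ⟨M, hM⟩ := hbdd
  have h_bot : Tendsto (fun y => M - ε * p y) (cocompact X) atBot :=
    tendsto_atBot_add_const_left _ M (tendsto_neg_atTop_atBot.comp (hp_top.const_mul_atTop hε))
  obtain ⟨x, hx⟩ := (hf.sub (hp.const_smul ε)).exists_forall_ge
    (tendsto_atBot_mono (fun y => sub_le_sub_right (hM ⟨y, rfl⟩) _) h_bot)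
  exact ⟨x, isMaxOn_univ_iff.2 hx⟩

variable {ι : Type*} {l : Filter ι} {ε : ι → ℝ} {x : ι → X}

lemma tendsto_sub_mul_of_isMaxOn_sub_smul [Nonempty X] (hbdd : BddAbove (Set.range f))
    (hp : ∀ y, 0 ≤ p y) (hε : ∀ k, 0 ≤ ε k) (hε_zero : Tendsto ε l (𝓝 0))
    (hx : ∀ k, IsMaxOn (f - ε k • p) Set.univ (x k)) :
    Tendsto (fun k => f (x k) - ε k * p (x k)) l (𝓝 (⨆ y, f y)) := by
  refine tendsto_order.2 ⟨fun a ha => ?_, fun a ha => Eventually.of_forall fun k => ?_⟩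
  · obtain ⟨y, hy⟩ := exists_lt_of_lt_ciSup ha
    have h_at_y : Tendsto (fun k => f y - ε k * p y) l (𝓝 (f y)) := by
      simpa using (hε_zero.mul_const (p y)).const_sub (f y)
    filter_upwards [h_at_y.eventually_const_lt hy] with k hk
    exact hk.trans_le (hx k (Set.mem_univ y))
  · exact ((sub_le_self _ (mul_nonneg (hε k) (hp _))).trans (le_ciSup hbdd _)).trans_lt ha

lemma tendsto_iSup_of_isMaxOn_sub_smul [Nonempty X] (hbdd : BddAbove (Set.range f))
    (hp : ∀ y, 0 ≤ p y) (hε : ∀ k, 0 ≤ ε k) (hε_zero : Tendsto ε l (𝓝 0))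
    (hx : ∀ k, IsMaxOn (f - ε k • p) Set.univ (x k)) :
    Tendsto (fun k => f (x k)) l (𝓝 (⨆ y, f y)) :=
  tendsto_of_tendsto_of_tendsto_of_le_of_le
    (tendsto_sub_mul_of_isMaxOn_sub_smul hbdd hp hε hε_zero hx) tendsto_const_nhds
    (fun k => sub_le_self _ (mul_nonneg (hε k) (hp _))) (fun k => le_ciSup hbdd (x k))

lemma tendsto_mul_zero_of_isMaxOn_sub_smul [Nonempty X] (hbdd : BddAbove (Set.range f))
    (hp : ∀ y, 0 ≤ p y) (hε : ∀ k, 0 ≤ ε k) (hε_zero : Tendsto ε l (𝓝 0))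
    (hx : ∀ k, IsMaxOn (f - ε k • p) Set.univ (x k)) :
    Tendsto (fun k => ε k * p (x k)) l (𝓝 0) := by
  simpa using (tendsto_iSup_of_isMaxOn_sub_smul hbdd hp hε hε_zero hx).sub
    (tendsto_sub_mul_of_isMaxOn_sub_smul hbdd hp hε hε_zero hx)

end Penalization

section SecondOrder

lemma deriv_deriv_nonpos_of_isLocalMax {g : ℝ → ℝ} {a : ℝ} (hg : ContinuousAt g a)
    (hmax : IsLocalMax g a) : deriv (deriv g) a ≤ 0 := by
  by_contra! hpos
  have hmin : IsLocalMin g a := isLocalMin_of_deriv_deriv_pos hpos hmax.deriv_eq_zero hg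
  have hconst : g =ᶠ[𝓝 a] fun _ => g a := by
    filter_upwards [hmax, hmin] with t h_le h_ge using le_antisymm h_le h_ge
  simp [hconst.deriv.deriv_eq] at hpos

variable {E : Type*} [NormedAddCommGroup E]

section NormedSpace

variable [NormedSpace ℝ E] {f g : E → ℝ} {x : E}

lemma deriv_deriv_comp_line (hf : ∀ᶠ y in 𝓝 x, DifferentiableAt ℝ f y)
    (hf' : DifferentiableAt ℝ (fderiv ℝ f) x) (v : E) :
    deriv (deriv fun t : ℝ => f (x + t • v)) 0 = fderiv ℝ (fderiv ℝ f) x v v := by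
  have hline (t : ℝ) : HasDerivAt (fun t : ℝ => x + t • v) v t := by
    simpa using ((hasDerivAt_id t).smul_const v).const_add x
  have hline_zero : x + (0 : ℝ) • v = x := by simp
  have hfirst : deriv (fun t : ℝ => f (x + t • v)) =ᶠ[𝓝 0] fun t => fderiv ℝ f (x + t • v) v := by
    have hnear : Tendsto (fun t : ℝ => x + t • v) (𝓝 0) (𝓝 x) := by
      simpa using (hline 0).continuousAt.tendsto
    filter_upwards [hnear.eventually hf] with t ht
    exact (ht.hasFDerivAt.comp_hasDerivAt t (hline t)).deriv
  have hsecond : HasDerivAt (fun t : ℝ => fderiv ℝ f (x + t • v))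
      (fderiv ℝ (fderiv ℝ f) x v) 0 :=
    hf'.hasFDerivAt.comp_hasDerivAt_of_eq 0 (hline 0) hline_zero.symm
  rw [hfirst.deriv_eq]
  simpa using (hsecond.clm_apply (hasDerivAt_const 0 v)).deriv

lemma fderiv_fderiv_apply_self_nonpos_of_isLocalMax (hf : ∀ᶠ y in 𝓝 x, DifferentiableAt ℝ f y)
    (hf' : DifferentiableAt ℝ (fderiv ℝ f) x) (hmax : IsLocalMax f x) (v : E) :
    fderiv ℝ (fderiv ℝ f) x v v ≤ 0 := by
  have hline : ContinuousAt (fun t : ℝ => x + t • v) 0 := by fun_prop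
  have hcont : ContinuousAt (fun t : ℝ => f (x + t • v)) 0 :=
    hf.self_of_nhds.continuousAt.comp_of_eq hline (by simp)
  have hmax_line : IsLocalMax (fun t : ℝ => f (x + t • v)) 0 :=
    IsLocalMax.comp_continuous (g := fun t : ℝ => x + t • v) (by simpa using hmax) hline
  exact (deriv_deriv_comp_line hf hf' v).symm.trans_le
    (deriv_deriv_nonpos_of_isLocalMax hcont hmax_line)

lemma fderiv_fderiv_apply_self_le_of_isLocalMax_sub (hf : ∀ᶠ y in 𝓝 x, DifferentiableAt ℝ f y)
    (hf' : DifferentiableAt ℝ (fderiv ℝ f) x) (hg : ∀ᶠ y in 𝓝 x, DifferentiableAt ℝ g y)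
    (hg' : DifferentiableAt ℝ (fderiv ℝ g) x) (hmax : IsLocalMax (f - g) x) (v : E) :
    fderiv ℝ (fderiv ℝ f) x v v ≤ fderiv ℝ (fderiv ℝ g) x v v := by
  have hsub : fderiv ℝ (f - g) =ᶠ[𝓝 x] fderiv ℝ f - fderiv ℝ g := by
    filter_upwards [hf, hg] with y hfy hgy using fderiv_sub hfy hgy
  have hnonpos := fderiv_fderiv_apply_self_nonpos_of_isLocalMax
    (hf.and hg |>.mono fun y hy => hy.1.sub hy.2)
    ((hf'.sub hg').congr_of_eventuallyEq hsub) hmax v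
  rw [hsub.fderiv_eq, fderiv_sub hf' hg'] at hnonpos
  exact sub_nonpos.1 hnonpos

end NormedSpace

variable [InnerProductSpace ℝ E] {f g : E → ℝ} {x : E}

lemma gradient_eq_smul_of_isLocalMax_sub_smul_norm_sq [CompleteSpace E] {ε : ℝ}
    (hf : DifferentiableAt ℝ f x)
    (hmax : IsLocalMax (f - ε • fun y => ‖y‖ ^ 2) x) : gradient f x = (2 * ε) • x := by
  have hderiv := hf.hasFDerivAt.sub ((hasStrictFDerivAt_norm_sq x).hasFDerivAt.const_smul ε)
  have hcrit : fderiv ℝ f x = ε • 2 • innerSL ℝ x :=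
    sub_eq_zero.1 (hmax.hasFDerivAt_eq_zero hderiv)
  refine ext_inner_right ℝ fun v => ?_
  simp only [inner_gradient_left, hcrit, real_inner_smul_left, smul_apply, innerSL_apply_apply]
  ring

variable [FiniteDimensional ℝ E]

open scoped Laplacian

lemma laplacian_eq_sum_fderiv_fderiv {ι : Type*} [Fintype ι] (b : OrthonormalBasis ι ℝ E)
    (f : E → ℝ) (x : E) : Δ f x = ∑ i, fderiv ℝ (fderiv ℝ f) x (b i) (b i) := by
  simp [InnerProductSpace.laplacian_eq_iteratedFDeriv_orthonormalBasis f b,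
    iteratedFDeriv_two_apply]

lemma laplacian_le_of_isLocalMax_sub (hf : ∀ᶠ y in 𝓝 x, DifferentiableAt ℝ f y)
    (hf' : DifferentiableAt ℝ (fderiv ℝ f) x) (hg : ∀ᶠ y in 𝓝 x, DifferentiableAt ℝ g y)
    (hg' : DifferentiableAt ℝ (fderiv ℝ g) x) (hmax : IsLocalMax (f - g) x) :
    Δ f x ≤ Δ g x := by
  simp only [laplacian_eq_sum_fderiv_fderiv (stdOrthonormalBasis ℝ E)]
  exact Finset.sum_le_sum fun i _ =>
    fderiv_fderiv_apply_self_le_of_isLocalMax_sub hf hf' hg hg' hmax _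

lemma laplacian_norm_sq (x : E) :
    Δ (fun y : E => ‖y‖ ^ 2) x = 2 * Module.finrank ℝ E := by
  have hhess : fderiv ℝ (fderiv ℝ fun y : E => ‖y‖ ^ 2) x = 2 • innerSL ℝ := by
    rw [fderiv_norm_sq]
    exact (2 • innerSL ℝ (E := E)).fderiv
  have hhess_apply (v : E) : fderiv ℝ (fderiv ℝ fun y : E => ‖y‖ ^ 2) x v v = 2 * ‖v‖ ^ 2 := by
    rw [hhess, two_mul, two_nsmul, ← real_inner_self_eq_norm_sq]
    rfl
  simp [laplacian_eq_sum_fderiv_fderiv (stdOrthonormalBasis ℝ E), hhess_apply, mul_comm]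

lemma laplacian_le_of_isLocalMax_sub_smul_norm_sq {ε : ℝ}
    (hf : ∀ᶠ y in 𝓝 x, DifferentiableAt ℝ f y) (hf' : DifferentiableAt ℝ (fderiv ℝ f) x)
    (hmax : IsLocalMax (f - ε • fun y => ‖y‖ ^ 2) x) :
    Δ f x ≤ ε * (2 * Module.finrank ℝ E) := by
  have hnorm : ContDiff ℝ 2 fun y : E => ‖y‖ ^ 2 := contDiff_norm_sq ℝ
  have hpen : ContDiff ℝ 2 (ε • fun y : E => ‖y‖ ^ 2) := hnorm.const_smul ε
  calc Δ f x ≤ Δ (ε • fun y : E => ‖y‖ ^ 2) x :=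
        laplacian_le_of_isLocalMax_sub hf hf'
          (Eventually.of_forall (hpen.differentiable two_ne_zero))
          ((hpen.fderiv_right (m := 1) le_rfl).differentiable one_ne_zero x) hmax
    _ = ε * (2 * Module.finrank ℝ E) := by
        rw [InnerProductSpace.laplacian_smul ε hnorm.contDiffAt, laplacian_norm_sq, smul_eq_mul]

lemma drift_laplacian_le_of_isLocalMax_sub_smul_norm_sq [CompleteSpace E] {ε : ℝ} (hε : 0 ≤ ε)
    (hf : ∀ᶠ y in 𝓝 x, DifferentiableAt ℝ f y) (hf' : DifferentiableAt ℝ (fderiv ℝ f) x)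
    (hmax : IsLocalMax (f - ε • fun y => ‖y‖ ^ 2) x) :
    Δ f x - ⟪x, gradient f x⟫ ≤ ε * (2 * Module.finrank ℝ E) := by
  have hdrift : 0 ≤ ⟪x, gradient f x⟫ := by
    rw [gradient_eq_smul_of_isLocalMax_sub_smul_norm_sq hf.self_of_nhds hmax,
      real_inner_smul_right, real_inner_self_eq_norm_sq]
    positivity
  exact (sub_le_self _ hdrift).trans (laplacian_le_of_isLocalMax_sub_smul_norm_sq hf hf' hmax)

end SecondOrder

section MaximumPrinciple

open scoped Laplacian

variable {E : Type*} [NormedAddCommGroup E] [InnerProductSpace ℝ E] [FiniteDimensional ℝ E]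

lemma exists_isMaxOn_sub_smul_norm_sq {f : E → ℝ} (hf : Continuous f)
    (hbdd : BddAbove (Set.range f)) {ε : ℝ} (hε : 0 < ε) :
    ∃ x, IsMaxOn (f - ε • fun y => ‖y‖ ^ 2) Set.univ x :=
  have : ProperSpace E := FiniteDimensional.proper ℝ E
  exists_isMaxOn_sub_smul hf hbdd (by fun_prop)
    ((tendsto_pow_atTop two_ne_zero).comp (tendsto_norm_cocompact_atTop (E := E))) hε

-- The last clause is stronger than `limsup ≤ 0`: in `ℝ` the `limsup` of a sequence that is not
-- bounded above is the junk value `0`.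
theorem generalized_maximum_principle_general [CompleteSpace E] {f : E → ℝ}
    (hf : Differentiable ℝ f) (hf' : Differentiable ℝ (fderiv ℝ f))
    (hbdd : BddAbove (Set.range f)) :
    ∃ x : ℕ → E,
      Tendsto (fun k => f (x k)) atTop (𝓝 (⨆ y, f y)) ∧
      Tendsto (fun k => ‖gradient f (x k)‖) atTop (𝓝 0) ∧
      ∀ δ > 0, ∀ᶠ k in atTop, Δ f (x k) - ⟪x k, gradient f (x k)⟫ ≤ δ := by
  obtain ⟨ε, -, hε, hε_zero⟩ := exists_seq_strictAnti_tendsto (0 : ℝ)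
  choose x hx using fun k => exists_isMaxOn_sub_smul_norm_sq hf.continuous hbdd (hε k)
  have hx_loc (k : ℕ) : IsLocalMax (f - ε k • fun y => ‖y‖ ^ 2) (x k) :=
    (hx k).isLocalMax univ_mem
  have hpen : Tendsto (fun k => ε k * ‖x k‖ ^ 2) atTop (𝓝 0) :=
    tendsto_mul_zero_of_isMaxOn_sub_smul hbdd (fun y => sq_nonneg ‖y‖) (fun k => (hε k).le)
      hε_zero hx
  refine ⟨x, tendsto_iSup_of_isMaxOn_sub_smul hbdd (fun y => sq_nonneg ‖y‖)
    (fun k => (hε k).le) hε_zero hx, ?_, fun δ hδ => ?_⟩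
  · have hgrad_sq (k : ℕ) : ‖gradient f (x k)‖ ^ 2 = 4 * ε k * (ε k * ‖x k‖ ^ 2) := by
      rw [gradient_eq_smul_of_isLocalMax_sub_smul_norm_sq (hf _) (hx_loc k), norm_smul, mul_pow,
        Real.norm_eq_abs, sq_abs]
      ring
    have hsq : Tendsto (fun k => ‖gradient f (x k)‖ ^ 2) atTop (𝓝 0) := by
      simpa [hgrad_sq] using (hε_zero.const_mul 4).mul hpen
    simpa using hsq.sqrt
  · have hbound : Tendsto (fun k => ε k * (2 * Module.finrank ℝ E)) atTop (𝓝 0) := by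
      simpa using hε_zero.mul_const (2 * Module.finrank ℝ E : ℝ)
    filter_upwards [hbound.eventually_le_const hδ] with k hk
    exact (drift_laplacian_le_of_isLocalMax_sub_smul_norm_sq (hε k).le
      (Eventually.of_forall hf) (hf' _) (hx_loc k)).trans hk

lemma laplacian_eq_euclLaplacian {n : ℕ} {f : EuclideanSpace ℝ (Fin n) → ℝ}
    {x : EuclideanSpace ℝ (Fin n)} (hf' : DifferentiableAt ℝ (fderiv ℝ f) x) :
    Δ f x = euclLaplacian f x := by
  simp [laplacian_eq_sum_fderiv_fderiv (EuclideanSpace.basisFun (Fin n) ℝ), euclLaplacian,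
    fderiv_clm_apply hf' (differentiableAt_const _)]

lemma limsup_nonpos_of_forall_eventually_le {ι : Type*} {l : Filter ι} {u : ι → ℝ}
    (hu : ∀ δ > 0, ∀ᶠ k in l, u k ≤ δ) : limsup u l ≤ 0 := by
  rw [limsup_eq]
  by_cases hbdd : BddBelow {a | ∀ᶠ k in l, u k ≤ a}
  · exact le_of_forall_pos_le_add fun δ hδ => by simpa using csInf_le hbdd (hu δ hδ)
  · exact (Real.sInf_of_not_bddBelow hbdd).le

end MaximumPrinciple

/-- Generalized maximum principle for the drift operator `ℒf = Δf − ⟨x, ∇f⟩` on `ℝⁿ`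
(a flat `λ`-hypersurface with `λ = 0`): if `f` is `C²` and bounded above, there is a
sequence `(x_k)` with `f(x_k) → sup f`, `‖∇f(x_k)‖ → 0`, and
`limsup_k (Δf(x_k) − ⟨x_k, ∇f(x_k)⟩) ≤ 0`. -/
theorem generalized_maximum_principle (n : ℕ) (hn : 1 ≤ n)
    (f : EuclideanSpace ℝ (Fin n) → ℝ) (hf : ContDiff ℝ 2 f)
    (hbdd : BddAbove (Set.range f)) :
    ∃ x : ℕ → EuclideanSpace ℝ (Fin n),
      Tendsto (fun k => f (x k)) atTop (𝓝 (⨆ y, f y)) ∧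
      Tendsto (fun k => ‖gradient f (x k)‖) atTop (𝓝 0) ∧
      limsup (fun k => euclLaplacian f (x k) - ⟪x k, gradient f (x k)⟫) atTop ≤ 0 := by
  have hf' : Differentiable ℝ (fderiv ℝ f) :=
    (hf.fderiv_right (m := 1) le_rfl).differentiable one_ne_zero
  obtain ⟨x, hsup, hgrad, hdrift⟩ :=
    generalized_maximum_principle_general (hf.differentiable two_ne_zero) hf' hbdd
  simp only [laplacian_eq_euclLaplacian (hf' _)] at hdrift
  exact ⟨x, hsup, hgrad, limsup_nonpos_of_forall_eventually_le hdrift⟩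
end
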